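/- Let C be a quasiminimal pregeometry class, H, H' ∈ C uncountable, let B and B' be bases of the pregeometries (H, cl_H) and (H', cl_{H'}) respectively, and let g : B → B' be a bijection. Then g extends to an isomorphism ĝ : H → H' of L-structures. -/

import Mathlib

open FirstOrder FirstOrder.Language Set Cardinal



universe u u' v w

namespace QM

variable {L : FirstOrder.Language.{v, w}}

/-- Formulas of `L_{ω₁,ω}`: built from atomic formulas by negation, countable
conjunction (indexed by `ℕ`), and universal quantification; `α` is the type of free
variables and `n` counts the de Bruijn bound variables. Countable disjunctions and
the existential quantifier are definable via negation. -/
inductive InfFormula (L : FirstOrder.Language.{v, w}) (α : Type u) : ℕ → Type (max u v w)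
  | falsum {n : ℕ} : InfFormula L α n
  | equal {n : ℕ} (t₁ t₂ : L.Term (α ⊕ (Fin n))) : InfFormula L α n
  | rel {n l : ℕ} (R : L.Relations l) (ts : Fin l → L.Term (α ⊕ (Fin n))) : InfFormula L α n
  | not {n : ℕ} (φ : InfFormula L α n) : InfFormula L α n
  | iInf {n : ℕ} (φ : ℕ → InfFormula L α n) : InfFormula L α n
  | all {n : ℕ} (φ : InfFormula L α (n + 1)) : InfFormula L α n

/-- Satisfaction of an `L_{ω₁,ω}`-formula in an `L`-structure `M`, given an
assignment `v` of the free variables and `xs` of the bound variables. -/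
def InfFormula.Realize {M : Type u'} [L.Structure M] {α : Type u} :
    ∀ {n : ℕ}, InfFormula L α n → (α → M) → (Fin n → M) → Prop
  | _, .falsum, _, _ => False
  | _, .equal t₁ t₂, v, xs => t₁.realize (Sum.elim v xs) = t₂.realize (Sum.elim v xs)
  | _, .rel R ts, v, xs => Structure.RelMap R (fun i => (ts i).realize (Sum.elim v xs))
  | _, .not φ, v, xs => ¬ φ.Realize v xs
  | _, .iInf φ, v, xs => ∀ i : ℕ, (φ i).Realize v xs
  | _, .all φ, v, xs => ∀ x : M, φ.Realize v (Fin.snoc xs x)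

/-- An `L_{ω₁,ω}`-sentence. -/
abbrev InfSentence (L : FirstOrder.Language.{v, w}) := InfFormula L PEmpty 0

/-- Satisfaction of an `L_{ω₁,ω}`-sentence. -/
def InfSentence.RealizeS (M : Type u') [L.Structure M] (φ : InfSentence L) : Prop :=
  InfFormula.Realize (M := M) φ PEmpty.elim (fun i => i.elim0)

/-- Satisfaction of an `L_{ω₁,ω}`-formula with parameters from the set `A`
and `m` free variables `v̄`, at the tuple `v`. -/
def InfFormula.RealizeP {M : Type u'} [L.Structure M] {A : Set M} {m : ℕ}
    (φ : InfFormula L (↥A ⊕ Fin m) 0) (v : Fin m → M) : Prop :=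
  φ.Realize (Sum.elim Subtype.val v) (fun i => i.elim0)

/-- The domain of a partial map, viewed as a graph (set of pairs). -/
def pdom {H : Type*} {H' : Type*} (p : Set (H × H')) : Set H := Prod.fst '' p

/-- The image of a partial map, viewed as a graph (set of pairs). -/
def pimg {H : Type*} {H' : Type*} (p : Set (H × H')) : Set H' := Prod.snd '' p

/-- The image of a set `X` under a partial map given as a graph. -/
def pimage {H : Type*} {H' : Type*} (p : Set (H × H')) (X : Set H) : Set H' :=
  {b | ∃ a ∈ X, (a, b) ∈ p}

/-- A partial map (given as its graph `p`) is a partial embedding if it preserves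
quantifier-free first-order formulas. (This forces `p` to be the graph of an
injective partial function.) -/
def IsPartialEmbedding {H : Type u} {H' : Type u} [L.Structure H] [L.Structure H']
    (p : Set (H × H')) : Prop :=
  ∀ (n : ℕ) (φ : L.Formula (Fin n)), BoundedFormula.IsQF φ →
    ∀ (a : Fin n → H) (b : Fin n → H'), (∀ i, (a i, b i) ∈ p) →
      (φ.Realize a ↔ φ.Realize b)

/-- A partial map is a σ-embedding if it is a partial embedding and preserves all
`L_{ω₁,ω}`-formulas with (possibly infinitely many) parameters from its domain;
equivalently `⟨M, m⟩_{m ∈ dom p} ≡_{ω₁,ω} ⟨N, p(m)⟩_{m ∈ dom p}`. -/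
def IsSigmaEmbedding {H : Type u} {H' : Type u} [L.Structure H] [L.Structure H']
    (p : Set (H × H')) : Prop :=
  IsPartialEmbedding (L := L) p ∧
    ∀ (φ : InfFormula L (↥(pdom p)) 0) (b : ↥(pdom p) → H'),
      (∀ x : ↥(pdom p), ((x : H), b x) ∈ p) →
        (φ.Realize Subtype.val (fun i => i.elim0) ↔ φ.Realize b (fun i => i.elim0))

/-- A pregeometry (combinatorial geometry) on a set. -/
structure IsPregeometry {α : Type*} (cl : Set α → Set α) : Prop where
  subset_cl : ∀ X, X ⊆ cl X
  mono : ∀ ⦃X Y : Set α⦄, X ⊆ Y → cl X ⊆ cl Y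
  idem : ∀ X, cl (cl X) = cl X
  finChar : ∀ (X : Set α) (y : α), y ∈ cl X → ∃ F : Finset α, ↑F ⊆ X ∧ y ∈ cl ↑F
  exchange : ∀ (X : Set α) (a b : α), a ∈ cl (X ∪ {b}) → a ∉ cl X → b ∈ cl (X ∪ {a})

/-- A pair `⟨H, cl_H⟩` of an `L`-structure and a closure operator on it. -/
structure QMObj (L : FirstOrder.Language.{v, w}) where
  carrier : Type u
  [str : L.Structure carrier]
  cl : Set carrier → Set carrier

attribute [instance] QMObj.str

/-- `G` is countable and closed, or empty. -/
def CCOE (H : QMObj.{u} L) (G : Set H.carrier) : Prop :=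
  (G.Countable ∧ H.cl G = G) ∨ G = ∅

/-- The axioms for a class of pairs `⟨H, cl_H⟩` to be a quasiminimal pregeometry class. -/
structure IsQMClass (C : Set (QMObj.{u} L)) : Prop where
  /-- Closure under isomorphisms, transporting the closure operator. -/
  iso_closed : ∀ H ∈ C, ∀ (N : Type u) [_iN : L.Structure N] (f : H.carrier ≃[L] N),
      (⟨N, fun X => f '' (H.cl (f ⁻¹' X))⟩ : QMObj L) ∈ C
  /-- Any two members satisfy the same quantifier-free sentences. -/
  qf_theory : ∀ H ∈ C, ∀ H' ∈ C, ∀ (φ : L.Sentence), BoundedFormula.IsQF φ →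
      (H.carrier ⊨ φ ↔ H'.carrier ⊨ φ)
  /-- Each `cl_H` is a pregeometry. -/
  pregeom : ∀ H ∈ C, IsPregeometry H.cl
  /-- The closure of a finite set is countable. -/
  cl_finite_countable : ∀ H ∈ C, ∀ X : Set H.carrier, X.Finite → (H.cl X).Countable
  /-- The closure of any set is (the underlying set of) a substructure which, with the
  restricted closure operator, is again a member of the class. -/
  cl_mem : ∀ H ∈ C, ∀ X : Set H.carrier, ∃ S : L.Substructure H.carrier,
      (S : Set H.carrier) = H.cl X ∧
      (⟨↥S, fun Y => Subtype.val ⁻¹' (H.cl (Subtype.val '' Y))⟩ : QMObj L) ∈ C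
  /-- Partial embeddings preserve and reflect the closure relation. -/
  cl_embedding : ∀ H ∈ C, ∀ H' ∈ C, ∀ (p : Set (H.carrier × H'.carrier)),
      IsPartialEmbedding (L := L) p → ∀ X ⊆ pdom p, ∀ (y : H.carrier) (y' : H'.carrier),
        (y, y') ∈ p → (y ∈ H.cl X ↔ y' ∈ H'.cl (pimage p X))
  /-- ℵ₀-homogeneity over countable closed models, part (i): an isomorphism between
  countable closed (or empty) sets extends by any pair of independent points. -/
  homogeneity₁ : ∀ H ∈ C, ∀ H' ∈ C, ∀ (g : Set (H.carrier × H'.carrier)),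
      CCOE H (pdom g) → CCOE H' (pimg g) → IsPartialEmbedding (L := L) g →
      ∀ (x : H.carrier) (x' : H'.carrier), x ∉ H.cl (pdom g) → x' ∉ H'.cl (pimg g) →
        IsPartialEmbedding (L := L) (g ∪ {(x, x')})
  /-- ℵ₀-homogeneity over countable closed models, part (ii). -/
  homogeneity₂ : ∀ H ∈ C, ∀ H' ∈ C, ∀ (g f : Set (H.carrier × H'.carrier)),
      CCOE H (pdom g) → CCOE H' (pimg g) → IsPartialEmbedding (L := L) g →
      (pdom f).Finite → IsPartialEmbedding (L := L) (g ∪ f) →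
      ∀ y ∈ H.cl (pdom f ∪ pdom g), ∃ y' : H'.carrier,
        IsPartialEmbedding (L := L) (g ∪ f ∪ {(y, y')})


/-- `p` is a σ-type over `A` in `m` variables: every countable subset of `p` is
consistent with the structure, i.e. simultaneously satisfiable. -/
def IsSigmaType {M : Type u'} [L.Structure M] {A : Set M} {m : ℕ}
    (p : Set (InfFormula L (↥A ⊕ Fin m) 0)) : Prop :=
  ∀ Φ ⊆ p, Φ.Countable → ∃ v : Fin m → M, ∀ φ ∈ Φ, φ.RealizeP v

/-- A σ-type `p` is isolated if there is a consistent `L_{ω₁,ω}`-formula `ψ(x̄)`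
(possibly with parameters from `M`) such that `ψ` implies every formula of `p`. -/
def IsIsolated {M : Type u'} [L.Structure M] {A : Set M} {m : ℕ}
    (p : Set (InfFormula L (↥A ⊕ Fin m) 0)) : Prop :=
  ∃ ψ : InfFormula L (M ⊕ Fin m) 0,
    (∃ v : Fin m → M, ψ.Realize (Sum.elim id v) (fun i => i.elim0)) ∧
    ∀ φ ∈ p, ∀ v : Fin m → M, ψ.Realize (Sum.elim id v) (fun i => i.elim0) → φ.RealizeP v

/-- A σ-type `p` is realised if some tuple satisfies every formula of `p`. -/
def IsRealized {M : Type u'} [L.Structure M] {A : Set M} {m : ℕ}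
    (p : Set (InfFormula L (↥A ⊕ Fin m) 0)) : Prop :=
  ∃ v : Fin m → M, ∀ φ ∈ p, φ.RealizeP v

/-- `B` is an independent subset of the pregeometry `⟨H, cl_H⟩`. -/
def IsIndep (H : QMObj.{u} L) (B : Set H.carrier) : Prop :=
  ∀ x ∈ B, x ∉ H.cl (B \ {x})

/-- `B` is a basis of the pregeometry `⟨H, cl_H⟩`: a maximal independent subset. -/
def IsBasis (H : QMObj.{u} L) (B : Set H.carrier) : Prop :=
  IsIndep H B ∧ ∀ B' : Set H.carrier, B ⊆ B' → IsIndep H B' → B' = B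

/-- The model-theoretic algebraic closure of `X` in `M`: the set of elements
satisfying some first-order formula with parameters in `X` having finitely many
solutions. -/
def aclS (L : FirstOrder.Language.{v, w}) (M : Type u) [L.Structure M] (X : Set M) :
    Set M :=
  {y | ∃ (n : ℕ) (φ : L.BoundedFormula (Fin n) 1) (v : Fin n → M),
    (∀ i, v i ∈ X) ∧ φ.Realize v ![y] ∧ {z : M | φ.Realize v ![z]}.Finite}

/-!
Fix a countably infinite part `B₀` of the basis of `H`. By recursion on the finite sets `Z` of
remaining basis elements one chooses isomorphisms between the closures of `B₀ ∪ Z` and of its image,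
each extending those chosen for smaller sets; their union is the required isomorphism. At stage
`Z`, the maps already chosen on the faces, the closures of `B₀ ∪ (Z \ {z})` for `z ∈ Z`, agree where
two faces meet, and have to be extended simultaneously to the closure of `B₀ ∪ Z`.

Finitely many points involve only finitely many generators, so there is always an unused generator
`w ∈ B₀`, and by homogeneity `z` and `w` can be exchanged by an isomorphism of faces that fixes
everything generated by the other basis elements. Conjugating with such exchanges shows two things.
First, a map of the face opposite to `z` that fixes its intersections with the other faces remains
a partial embedding when prolonged by the identity of those faces; this glues the face maps to a
partial embedding of their union, the crown. Second, what a finite tuple satisfies over the faces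
indexed by `Y ∪ {z}` is determined by what it satisfies over the faces indexed by `Y` together with
finitely many points of the face opposite to `z`; this reduces homogeneity over crowns, by
induction on the number of faces, to homogeneity over the empty set, and a back-and-forth then
extends the map of the crown to the whole closure.
-/

open scoped SetRel

section PartialMap

variable {α β : Type*} {p : Set (α × β)}

/-- The identity map of `K`, as a graph; `idOn K ⊆ p` says that `p` fixes `K` pointwise. -/
def idOn (K : Set α) : Set (α × α) := {x | x.1 = x.2 ∧ x.1 ∈ K}

/-- The restriction of the graph `p` to arguments in `K`. -/
def restr (p : Set (α × β)) (K : Set α) : Set (α × β) := {x ∈ p | x.1 ∈ K}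

theorem mem_pdom {a : α} : a ∈ pdom p ↔ ∃ b, (a, b) ∈ p := by
  simp [pdom]

theorem mem_pimg {b : β} : b ∈ pimg p ↔ ∃ a, (a, b) ∈ p := by
  simp [pimg]

theorem pdom_inv (p : Set (α × β)) : pdom (SetRel.inv p) = pimg p := by
  ext; simp [mem_pdom, mem_pimg]

theorem pimg_inv (p : Set (α × β)) : pimg (SetRel.inv p) = pdom p := by
  ext; simp [mem_pdom, mem_pimg]

theorem pdom_idOn (K : Set α) : pdom (idOn K) = K := by
  ext; simp [mem_pdom, idOn]

theorem pimg_idOn (K : Set α) : pimg (idOn K) = K := by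
  ext; simp [mem_pimg, idOn]

theorem pdom_restr {K : Set α} (hK : K ⊆ pdom p) : pdom (restr p K) = K := by
  ext a
  simp only [mem_pdom, restr, mem_ofPred_eq, exists_and_right, and_iff_right_iff_imp]
  exact fun ha => mem_pdom.1 (hK ha)

theorem inv_finite (hp : p.Finite) : (SetRel.inv p).Finite :=
  hp.preimage Prod.swap_injective.injOn

theorem restr_subset (p : Set (α × β)) (K : Set α) : restr p K ⊆ p :=
  sep_subset _ _

end PartialMap

namespace IsPartialEmbedding

variable {A B D : Type u} [L.Structure A] [L.Structure B] [L.Structure D]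
  {p q : Set (A × B)}

theorem mono (hq : IsPartialEmbedding (L := L) q) (h : p ⊆ q) : IsPartialEmbedding (L := L) p :=
  fun n φ hφ a b hab => hq n φ hφ a b fun i => h (hab i)

theorem inv (hp : IsPartialEmbedding (L := L) p) :
    IsPartialEmbedding (L := L) (SetRel.inv p) :=
  fun n φ hφ a b hab => (hp n φ hφ b a hab).symm

theorem comp {r : Set (B × D)} (hp : IsPartialEmbedding (L := L) p)
    (hr : IsPartialEmbedding (L := L) r) : IsPartialEmbedding (L := L) (p ○ r) := by
  intro n φ hφ a d had
  choose b hab hbd using had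
  exact (hp n φ hφ a b hab).trans (hr n φ hφ b d hbd)

theorem idOn (K : Set A) : IsPartialEmbedding (L := L) (idOn K) := by
  intro n φ _ a b hab
  rw [show a = b from funext fun i => (hab i).1]

theorem of_finite (h : ∀ t ⊆ p, t.Finite → IsPartialEmbedding (L := L) t) :
    IsPartialEmbedding (L := L) p := fun n φ hφ a b hab =>
  h (range fun i => (a i, b i)) (range_subset_iff.2 hab) (finite_range _) n φ hφ a b
    fun i => mem_range_self i

theorem sUnion {c : Set (Set (A × B))} (hne : c.Nonempty) (hdir : DirectedOn (· ⊆ ·) c)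
    (hc : ∀ p ∈ c, IsPartialEmbedding (L := L) p) : IsPartialEmbedding (L := L) (⋃₀ c) := by
  refine of_finite fun t ht hfin => ?_
  obtain ⟨p, hp, htp⟩ := hdir.exists_mem_subset_of_finite_of_subset_sUnion hne hfin ht
  exact (hc p hp).mono htp

theorem eq_iff (hp : IsPartialEmbedding (L := L) p) {a a' : A} {b b' : B}
    (h : (a, b) ∈ p) (h' : (a', b') ∈ p) : a = a' ↔ b = b' := by
  have := hp 2 (Term.equal (Term.var 0) (Term.var 1))
    (BoundedFormula.IsAtomic.equal _ _).isQF ![a, a'] ![b, b'] (by simp [Fin.forall_fin_two, h, h'])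
  simpa [Formula.realize_equal] using this

theorem right_unique (hp : IsPartialEmbedding (L := L) p) {a : A} {b b' : B}
    (h : (a, b) ∈ p) (h' : (a, b') ∈ p) : b = b' :=
  (hp.eq_iff h h').1 rfl

theorem left_unique (hp : IsPartialEmbedding (L := L) p) {a a' : A} {b : B}
    (h : (a, b) ∈ p) (h' : (a', b) ∈ p) : a = a' :=
  (hp.eq_iff h h').2 rfl

theorem finite_restr (hp : IsPartialEmbedding (L := L) p) {K : Set A} (hK : K.Finite) :
    (restr p K).Finite := by
  refine Finite.of_finite_image (hK.subset (image_subset_iff.2 fun x hx => hx.2)) ?_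
  rintro ⟨a, b⟩ hab ⟨a', b'⟩ hab' (rfl : a = a')
  rw [hp.right_unique hab.1 hab'.1]

theorem exists_equiv (hp : IsPartialEmbedding (L := L) p) (hdom : pdom p = Set.univ)
    (himg : pimg p = Set.univ) : ∃ g : A ≃[L] B, ∀ x, (x, g x) ∈ p := by
  choose f hf using fun a => mem_pdom.1 (hdom ▸ mem_univ a)
  choose g hg using fun b => mem_pimg.1 (himg ▸ mem_univ b)
  refine ⟨{ toFun := f
            invFun := g
            left_inv := fun a => hp.left_unique (hg _) (hf _)
            right_inv := fun b => hp.right_unique (hf _) (hg _)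
            map_fun' := fun {n} F x => ?_
            map_rel' := fun {n} R x => ?_ }, hf⟩
  · have graph_iff := hp (n + 1) (Term.equal (Term.func F fun i => Term.var i.castSucc)
      (Term.var (Fin.last n))) (BoundedFormula.IsAtomic.equal _ _).isQF
      (Fin.snoc x (Structure.funMap F x)) (Fin.snoc (f ∘ x) (f (Structure.funMap F x)))
      (Fin.lastCases (by simpa using hf _) fun j => by simpa using hf _)
    simpa [Formula.realize_equal, eq_comm, Function.comp_def] using graph_iff
  · have rel_iff := hp n (R.formula fun i => Term.var i)
      (BoundedFormula.IsAtomic.rel _ _).isQF x (f ∘ x) fun i => hf _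
    simpa [Formula.realize_rel, Function.comp_def] using rel_iff.symm

end IsPartialEmbedding

section BackAndForth

variable {A B : Type u} [L.Structure A] [L.Structure B] {p : Set (A × B)} {K : Set A} {K' : Set B}

/-- The forth property: every partial embedding extending `p` by finitely many pairs from
`K × K'` can be extended to one more given point of `K`, with value in `K'`. -/
def Forth (L : FirstOrder.Language.{v, w}) {A B : Type u} [L.Structure A] [L.Structure B]
    (p : Set (A × B)) (K : Set A) (K' : Set B) : Prop :=
  ∀ s : Set (A × B), s.Finite → s ⊆ K ×ˢ K' → IsPartialEmbedding (L := L) (p ∪ s) →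
    ∀ a ∈ K, ∃ a' ∈ K', IsPartialEmbedding (L := L) (p ∪ s ∪ {(a, a')})

/-- The finite sets of pairs from `K × K'` by which the partial embedding `p` can be extended,
the conditions of the back-and-forth construction. -/
abbrev FiniteExtension (L : FirstOrder.Language.{v, w}) {A B : Type u} [L.Structure A]
    [L.Structure B] (p : Set (A × B)) (K : Set A) (K' : Set B) :=
  {s : Set (A × B) // s.Finite ∧ s ⊆ K ×ˢ K' ∧ IsPartialEmbedding (L := L) (p ∪ s)}

theorem Forth.isCofinal (h : Forth L p K K') {a : A} (ha : a ∈ K) :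
    IsCofinal {s : FiniteExtension L p K K' | a ∈ pdom s.1} := by
  rintro ⟨s, hs, hsK, hsp⟩
  obtain ⟨a', ha', hpe⟩ := h s hs hsK hsp a ha
  exact ⟨⟨s ∪ {(a, a')}, hs.union (finite_singleton _),
    union_subset hsK (singleton_subset_iff.2 ⟨ha, ha'⟩), by rwa [← union_assoc]⟩,
    mem_pdom.2 ⟨a', Or.inr rfl⟩, subset_union_left⟩

theorem Forth.isCofinal_inv (h : Forth L (SetRel.inv p) K' K) {b : B} (hb : b ∈ K') :
    IsCofinal {s : FiniteExtension L p K K' | b ∈ pimg s.1} := by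
  rintro ⟨s, hs, hsK, hsp⟩
  obtain ⟨⟨t, ht, htK, htp⟩, htb, hst⟩ :=
    h.isCofinal hb ⟨SetRel.inv s, inv_finite hs, fun x hx => (hsK hx).symm, hsp.inv⟩
  exact ⟨⟨SetRel.inv t, inv_finite ht, fun x hx => (htK hx).symm, htp.inv⟩,
    (pimg_inv t).ge htb, fun x hx => hst hx⟩

theorem Forth.union (h : Forth L p K K') {s : Set (A × B)} (hs : s.Finite) (hsK : s ⊆ K ×ˢ K') :
    Forth L (p ∪ s) K K' := fun t ht htK hpe => by
  rw [union_assoc] at hpe ⊢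
  exact h (s ∪ t) (hs.union ht) (union_subset hsK htK) hpe

theorem exists_back_and_forth (hK : K.Countable) (hK' : K'.Countable)
    (hp : IsPartialEmbedding (L := L) p) (hpK : p ⊆ K ×ˢ K')
    (forth : Forth L p K K') (back : Forth L (SetRel.inv p) K' K) :
    ∃ q, p ⊆ q ∧ IsPartialEmbedding (L := L) q ∧ pdom q = K ∧ pimg q = K' := by
  have := hK.to_subtype
  have := hK'.to_subtype
  let _ : Encodable (K ⊕ K') := Encodable.ofCountable _
  let task : K ⊕ K' → Order.Cofinal (FiniteExtension L p K K') :=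
    Sum.elim (fun a => ⟨_, forth.isCofinal a.2⟩) fun b => ⟨_, back.isCofinal_inv b.2⟩
  let G := Order.idealOfCofinals ⟨∅, finite_empty, empty_subset _, by rwa [union_empty]⟩ task
  let q := ⋃₀ ((fun s : FiniteExtension L p K K' => p ∪ s.1) '' G)
  have subset_q : ∀ s ∈ G, p ∪ s.1 ⊆ q := fun s hs => subset_sUnion_of_mem (mem_image_of_mem _ hs)
  have hqK : q ⊆ K ×ˢ K' :=
    sUnion_subset (forall_mem_image.2 fun s _ => union_subset hpK s.2.2.1)
  refine ⟨q, subset_union_left.trans (subset_q _ (Order.mem_idealOfCofinals _ task)), ?_,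
    (image_subset_iff.2 fun x hx => (hqK hx).1).antisymm fun a ha => ?_,
    (image_subset_iff.2 fun x hx => (hqK hx).2).antisymm fun b hb => ?_⟩
  · refine IsPartialEmbedding.sUnion (G.nonempty.image _) ?_ (forall_mem_image.2 fun s _ => s.2.2.2)
    exact directedOn_image.2 (G.directed.mono' fun s _ t _ hst => union_subset_union_right p hst)
  · obtain ⟨s, has, hsG⟩ := Order.cofinal_meets_idealOfCofinals _ task (Sum.inl ⟨a, ha⟩)
    exact image_mono (subset_union_right.trans (subset_q s hsG)) has
  · obtain ⟨s, hbs, hsG⟩ := Order.cofinal_meets_idealOfCofinals _ task (Sum.inr ⟨b, hb⟩)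
    exact image_mono (subset_union_right.trans (subset_q s hsG)) hbs

end BackAndForth

section Recursion

theorem exists_monotone_forall_of_exists_extension {ι β : Type*} [PartialOrder ι] [WellFoundedLT ι]
    [Preorder β] [Nonempty β] {P : ι → β → Prop}
    (hext : ∀ i (f : ι → β), MonotoneOn f (Iio i) → (∀ j < i, P j (f j)) →
      ∃ b, P i b ∧ ∀ j < i, f j ≤ b) :
    ∃ f : ι → β, Monotone f ∧ ∀ i, P i (f i) := by
  let next (i : ι) (f : ∀ j, j < i → β) : β :=
    Classical.epsilon fun b => P i b ∧ ∀ j (hj : j < i), f j hj ≤ b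
  let f : ι → β := WellFoundedLT.fix next
  have f_eq (i : ι) : f i = next i fun j _ => f j := WellFoundedLT.fix_eq next i
  have key (i : ι) : P i (f i) ∧ ∀ j < i, f j ≤ f i := by
    induction i using WellFoundedLT.induction with
    | ind i ih =>
      have hmono : MonotoneOn f (Iio i) := fun j _ k hk hjk => by
        rcases hjk.eq_or_lt with rfl | hlt
        exacts [le_rfl, (ih k hk).2 j hlt]
      rw [f_eq i]
      exact Classical.epsilon_spec (hext i f hmono fun j hj => (ih j hj).1)
  refine ⟨f, fun j k hjk => ?_, fun i => (key i).1⟩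
  rcases hjk.eq_or_lt with rfl | hlt
  exacts [le_rfl, (key k).2 j hlt]

end Recursion

section Pregeometry

variable {α I : Type*} {cl : Set α → Set α} {u : I → α} {S T : Set I}

theorem exists_finite_support_of_finite {K : Set I → Set α} (hK : Monotone K)
    (hS : ∀ y ∈ K S, ∃ F ⊆ S, F.Finite ∧ y ∈ K F) {t : Set α} (ht : t.Finite) (htS : t ⊆ K S) :
    ∃ F ⊆ S, F.Finite ∧ t ⊆ K F := by
  choose! F hFS hF hyF using hS
  exact ⟨⋃ y ∈ t, F y, iUnion₂_subset fun y hy => hFS y (htS hy),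
    ht.biUnion fun y hy => hF y (htS hy),
    fun y hy => hK (subset_biUnion_of_mem hy) (hyF y (htS hy))⟩

/-- The family `u` is independent on the index set `S`. -/
def IsIndepOn (cl : Set α → Set α) (u : I → α) (S : Set I) : Prop :=
  ∀ i ∈ S, u i ∉ cl (u '' (S \ {i}))

namespace IsPregeometry

theorem cl_subset_cl (h : IsPregeometry cl) {X Y : Set α} (hXY : X ⊆ cl Y) : cl X ⊆ cl Y :=
  h.idem Y ▸ h.mono hXY

theorem cl_insert_cl (h : IsPregeometry cl) (x : α) (X : Set α) :
    cl (insert x (cl X)) = cl (insert x X) :=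
  Subset.antisymm
    (h.cl_subset_cl (insert_subset (h.subset_cl _ (mem_insert _ _)) (h.mono (subset_insert _ _))))
    (h.mono (insert_subset_insert (h.subset_cl X)))

theorem countable_cl (h : IsPregeometry cl) (hfin : ∀ X : Set α, X.Finite → (cl X).Countable)
    {X : Set α} (hX : X.Countable) : (cl X).Countable := by
  refine ((countable_ofPred_finite_subset hX).biUnion fun t ht => hfin t ht.1).mono fun y hy => ?_
  obtain ⟨F, hFX, hyF⟩ := h.finChar X y hy
  exact mem_biUnion (show (F : Set α) ∈ _ from ⟨F.finite_toSet, hFX⟩) hyF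

theorem monotone_cl_image (h : IsPregeometry cl) (u : I → α) : Monotone fun S => cl (u '' S) :=
  fun _ _ hST => h.mono (image_mono hST)

theorem mem_cl_image (h : IsPregeometry cl) (u : I → α) {i : I} (hi : i ∈ S) : u i ∈ cl (u '' S) :=
  h.subset_cl _ (mem_image_of_mem u hi)

theorem exists_finite_support (h : IsPregeometry cl) {y : α} (hy : y ∈ cl (u '' S)) :
    ∃ F ⊆ S, F.Finite ∧ y ∈ cl (u '' F) := by
  obtain ⟨F, hF, hy⟩ := h.finChar _ y hy
  exact (exists_subset_image_finite_and (p := fun X => y ∈ cl X)).1 ⟨F, hF, F.finite_toSet, hy⟩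

theorem cl_image_iUnion (h : IsPregeometry cl) {ι : Type*} [Nonempty ι] {T : ι → Set I}
    (hT : Directed (· ⊆ ·) T) : cl (u '' ⋃ i, T i) = ⋃ i, cl (u '' T i) := by
  refine Subset.antisymm (fun y hy => ?_)
    (iUnion_subset fun i => h.monotone_cl_image u (subset_iUnion T i))
  obtain ⟨F, hFT, hF, hyF⟩ := h.exists_finite_support hy
  lift F to Finset I using hF
  obtain ⟨i, hi⟩ := hT.exists_mem_subset_of_finset_subset_biUnion hFT
  exact mem_iUnion_of_mem i (h.monotone_cl_image u hi hyF)

theorem cl_inter_cl_subset (h : IsPregeometry cl) (hu : IsIndepOn cl u S) (hT : T ⊆ S) {z : I}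
    (hz : z ∈ S) : cl (u '' T) ∩ cl (u '' (S \ {z})) ⊆ cl (u '' (T \ {z})) := by
  rintro a ⟨haT, haS⟩
  by_contra ha
  have hTz : u '' T ⊆ u '' (T \ {z}) ∪ {u z} := by
    rintro _ ⟨i, hi, rfl⟩
    by_cases hiz : i = z
    exacts [Or.inr (congrArg u hiz), Or.inl (mem_image_of_mem u ⟨hi, hiz⟩)]
  refine hu z hz (h.cl_subset_cl ?_ (h.exchange _ _ _ (h.mono hTz haT) ha))
  exact union_subset ((image_mono (sdiff_subset_sdiff_left hT)).trans (h.subset_cl _))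
    (singleton_subset_iff.2 haS)

end IsPregeometry

theorem IsIndepOn.mono (h : IsPregeometry cl) (hu : IsIndepOn cl u S) (hTS : T ⊆ S) :
    IsIndepOn cl u T :=
  fun i hi hc => hu i (hTS hi) (h.monotone_cl_image u (sdiff_subset_sdiff_left hTS) hc)

theorem IsIndepOn.notMem_cl (h : IsPregeometry cl) (hu : IsIndepOn cl u S) (hTS : T ⊆ S) {i : I}
    (hi : i ∈ S) (hiT : i ∉ T) : u i ∉ cl (u '' T) :=
  fun hc => hu i hi (h.monotone_cl_image u (subset_sdiff_singleton hTS hiT) hc)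

theorem IsIndep.isIndepOn {H : QMObj.{u} L} {B : Set H.carrier} (hB : IsIndep H B)
    {u : I → H.carrier} (hinj : Function.Injective u) (hrange : range u = B) :
    IsIndepOn H.cl u Set.univ := by
  subst hrange
  intro i _ hi
  refine hB (u i) (mem_range_self i) ?_
  rwa [image_sdiff hinj, image_univ, image_singleton] at hi

theorem IsBasis.cl_eq_univ {H : QMObj.{u} L} (h : IsPregeometry H.cl) {B : Set H.carrier}
    (hB : IsBasis H B) : H.cl B = Set.univ := by
  refine eq_univ_of_forall fun x => ?_
  by_contra hx
  have hxB : x ∉ B := fun hxB => hx (h.subset_cl _ hxB)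
  refine hxB (hB.2 (insert x B) (subset_insert _ _) ?_ ▸ mem_insert x B)
  rintro y (rfl | hyB) hy
  · exact hx (h.mono (by simp) hy)
  · have hyx : y ≠ x := fun hyx => hxB (hyx ▸ hyB)
    rw [insert_sdiff_of_notMem _ (by simpa using hyx.symm), ← union_singleton] at hy
    refine hx (h.mono ?_ (h.exchange _ _ _ hy (hB.1 y hyB)))
    exact union_subset sdiff_subset (singleton_subset_iff.2 hyB)

end Pregeometry

theorem CCOE.countable {H : QMObj.{u} L} {G : Set H.carrier} (hG : CCOE H G) : G.Countable :=
  hG.elim And.left fun hempty => hempty ▸ countable_empty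

/-- `H` and `H'` are members of some common quasiminimal pregeometry class. -/
def InCommonClass (H H' : QMObj.{u} L) : Prop :=
  ∃ C, IsQMClass C ∧ H ∈ C ∧ H' ∈ C

namespace InCommonClass

variable {H H' : QMObj.{u} L} {p g f : Set (H.carrier × H'.carrier)}

theorem symm (h : InCommonClass H H') : InCommonClass H' H :=
  let ⟨C, hC, hH, hH'⟩ := h
  ⟨C, hC, hH', hH⟩

theorem left (h : InCommonClass H H') : InCommonClass H H :=
  let ⟨C, hC, hH, _⟩ := h
  ⟨C, hC, hH, hH⟩

theorem pregeom (h : InCommonClass H H') : IsPregeometry H.cl :=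
  let ⟨_, hC, hH, _⟩ := h
  hC.pregeom H hH

theorem countable_cl (h : InCommonClass H H') {X : Set H.carrier} (hX : X.Countable) :
    (H.cl X).Countable :=
  let ⟨_, hC, hH, _⟩ := h
  h.pregeom.countable_cl (hC.cl_finite_countable H hH) hX

theorem ccoe_cl (h : InCommonClass H H') {X : Set H.carrier} (hX : X.Countable) :
    CCOE H (H.cl X) :=
  Or.inl ⟨h.countable_cl hX, h.pregeom.idem X⟩

theorem mem_cl (h : InCommonClass H H') (hp : IsPartialEmbedding (L := L) p) {a : H.carrier}
    {b : H'.carrier} (hab : (a, b) ∈ p) {X : Set H.carrier} {Y : Set H'.carrier}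
    (hXY : ∀ x ∈ X, ∃ y ∈ H'.cl Y, (x, y) ∈ p) (ha : a ∈ H.cl X) : b ∈ H'.cl Y := by
  obtain ⟨C, hC, hH, hH'⟩ := id h
  have hX : X ⊆ pdom p := fun x hx => mem_pdom.2 <| (hXY x hx).imp fun _ => And.right
  refine h.symm.pregeom.cl_subset_cl ?_ ((hC.cl_embedding H hH H' hH' p hp X hX a b hab).1 ha)
  rintro y ⟨x, hx, hxy⟩
  obtain ⟨y', hy', hxy'⟩ := hXY x hx
  rwa [hp.right_unique hxy hxy']

theorem isPartialEmbedding_empty (h : InCommonClass H H') :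
    IsPartialEmbedding (L := L) (∅ : Set (H.carrier × H'.carrier)) := by
  obtain ⟨C, hC, hH, hH'⟩ := h
  rintro (_ | n) φ hφ a b hab
  · have := hC.qf_theory H hH H' hH' (Formula.relabel (fun i : Fin 0 => (i.elim0 : Empty)) φ)
      (BoundedFormula.IsQF.relabel hφ _)
    simp only [Sentence.Realize, Formula.realize_relabel] at this
    convert this using 2
  · exact (hab 0).elim

theorem forth_cl (h : InCommonClass H H') (hg : CCOE H (pdom g)) (hg' : CCOE H' (pimg g))
    (hf : f.Finite) : Forth L (g ∪ f) (H.cl (pdom (g ∪ f))) (H'.cl (pimg (g ∪ f))) := by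
  intro s hs _ hpe a ha
  obtain ⟨C, hC, hH, hH'⟩ := id h
  have hgs : pdom (g ∪ f) ⊆ pdom (f ∪ s) ∪ pdom g := by
    simp only [pdom, image_union]
    exact union_subset subset_union_right (subset_union_left.trans subset_union_left)
  have hg_pe : IsPartialEmbedding (L := L) g := hpe.mono (subset_union_left.trans subset_union_left)
  rw [union_assoc] at hpe ⊢
  obtain ⟨a', ha'⟩ := hC.homogeneity₂ H hH H' hH' g (f ∪ s) hg hg' hg_pe
    ((hf.union hs).image _) hpe a (h.pregeom.mono hgs ha)
  refine ⟨a', h.mem_cl ha' (Or.inr rfl) (fun x hx => ?_) ha, ha'⟩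
  obtain ⟨y, hy⟩ := mem_pdom.1 hx
  exact ⟨y, h.symm.pregeom.subset_cl _ (mem_pimg.2 ⟨x, hy⟩),
    Or.inl (union_assoc g f s ▸ Or.inl hy)⟩

theorem exists_extension_cl (h : InCommonClass H H') (hg : CCOE H (pdom g))
    (hg' : CCOE H' (pimg g)) (hf : f.Finite) (hgf : IsPartialEmbedding (L := L) (g ∪ f)) :
    ∃ q, g ∪ f ⊆ q ∧ IsPartialEmbedding (L := L) q ∧ pdom q = H.cl (pdom (g ∪ f)) ∧
      pimg q = H'.cl (pimg (g ∪ f)) := by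
  have hdom : (pdom (g ∪ f)).Countable := by
    rw [pdom, image_union]
    exact hg.countable.union (hf.image _).countable
  have himg : (pimg (g ∪ f)).Countable := by
    rw [pimg, image_union]
    exact hg'.countable.union (hf.image _).countable
  refine exists_back_and_forth (h.countable_cl hdom) (h.symm.countable_cl himg) hgf
    (fun x hx => ⟨h.pregeom.subset_cl _ (mem_image_of_mem _ hx),
      h.symm.pregeom.subset_cl _ (mem_image_of_mem _ hx)⟩) (h.forth_cl hg hg' hf) ?_
  have back := h.symm.forth_cl (g := SetRel.inv g) (f := SetRel.inv f)
    (by rwa [pdom_inv]) (by rwa [pimg_inv]) (inv_finite hf)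
  rwa [show SetRel.inv g ∪ SetRel.inv f = SetRel.inv (g ∪ f) from rfl, pdom_inv, pimg_inv] at back

end InCommonClass

/-- `q` is an isomorphism from the closure of `u '' S` onto the closure of `u' '' S` that
sends `u i` to `u' i` for `i ∈ S`. -/
structure IsSpanIso {I : Type*} (H H' : QMObj.{u} L) (u : I → H.carrier) (u' : I → H'.carrier)
    (S : Set I) (q : Set (H.carrier × H'.carrier)) : Prop where
  isPartialEmbedding : IsPartialEmbedding (L := L) q
  pdom_eq : pdom q = H.cl (u '' S)
  pimg_eq : pimg q = H'.cl (u' '' S)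
  base_mem : ∀ i ∈ S, (u i, u' i) ∈ q

section SpanIso

variable {I : Type*} {H H' : QMObj.{u} L} {u : I → H.carrier} {u' : I → H'.carrier}
  {S T : Set I} {p q : Set (H.carrier × H'.carrier)}

theorem InCommonClass.mem_cl_image (h : InCommonClass H H') (hp : IsPartialEmbedding (L := L) p)
    {a : H.carrier} {b : H'.carrier} (hab : (a, b) ∈ p) (hbase : ∀ i ∈ S, (u i, u' i) ∈ p)
    (ha : a ∈ H.cl (u '' S)) : b ∈ H'.cl (u' '' S) :=
  h.mem_cl hp hab (forall_mem_image.2 fun i hi =>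
    ⟨u' i, h.symm.pregeom.mem_cl_image u' hi, hbase i hi⟩) ha

namespace IsSpanIso

theorem inv (hq : IsSpanIso H H' u u' S q) : IsSpanIso H' H u' u S (SetRel.inv q) :=
  ⟨hq.isPartialEmbedding.inv, (pdom_inv q).trans hq.pimg_eq, (pimg_inv q).trans hq.pdom_eq,
    hq.base_mem⟩

theorem iUnion (h : InCommonClass H H') {ι : Type*} [Preorder ι] [IsDirectedOrder ι] [Nonempty ι]
    {T : ι → Set I} {q : ι → Set (H.carrier × H'.carrier)} (hT : Monotone T) (hq : Monotone q)
    (hiso : ∀ i, IsSpanIso H H' u u' (T i) (q i)) :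
    IsSpanIso H H' u u' (⋃ i, T i) (⋃ i, q i) where
  isPartialEmbedding := IsPartialEmbedding.sUnion (range_nonempty q) hq.directed_le.directedOn_range
    (forall_mem_range.2 fun i => (hiso i).isPartialEmbedding)
  pdom_eq := by
    rw [h.pregeom.cl_image_iUnion hT.directed_le, pdom, image_iUnion]
    exact iUnion_congr fun i => (hiso i).pdom_eq
  pimg_eq := by
    rw [h.symm.pregeom.cl_image_iUnion hT.directed_le, pimg, image_iUnion]
    exact iUnion_congr fun i => (hiso i).pimg_eq
  base_mem := fun i hi =>
    let ⟨k, hk⟩ := mem_iUnion.1 hi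
    mem_iUnion_of_mem k ((hiso k).base_mem i hk)

theorem exists_insert (h : InCommonClass H H') (hS : S.Countable)
    (hq : IsSpanIso H H' u u' S q) {i : I} (hi : u i ∉ H.cl (u '' S))
    (hi' : u' i ∉ H'.cl (u' '' S)) : ∃ r, q ⊆ r ∧ IsSpanIso H H' u u' (insert i S) r := by
  obtain ⟨C, hC, hH, hH'⟩ := id h
  have hdom : CCOE H (pdom q) := hq.pdom_eq ▸ h.ccoe_cl (hS.image u)
  have himg : CCOE H' (pimg q) := hq.pimg_eq ▸ h.symm.ccoe_cl (hS.image u')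
  have hpe : IsPartialEmbedding (L := L) (q ∪ {(u i, u' i)}) :=
    hC.homogeneity₁ H hH H' hH' q hdom himg hq.isPartialEmbedding _ _
      (by rwa [hq.pdom_eq, h.pregeom.idem]) (by rwa [hq.pimg_eq, h.symm.pregeom.idem])
  obtain ⟨r, hqr, hr, hrdom, hrimg⟩ := h.exists_extension_cl hdom himg (finite_singleton _) hpe
  refine ⟨r, subset_union_left.trans hqr, hr, ?_, ?_, ?_⟩
  · rw [hrdom, union_singleton, pdom, image_insert_eq, ← pdom, hq.pdom_eq, h.pregeom.cl_insert_cl,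
      image_insert_eq]
  · rw [hrimg, union_singleton, pimg, image_insert_eq, ← pimg, hq.pimg_eq,
      h.symm.pregeom.cl_insert_cl, image_insert_eq]
  · rintro j (rfl | hj)
    exacts [hqr (Or.inr rfl), hqr (Or.inl (hq.base_mem j hj))]

theorem exists_extension (h : InCommonClass H H') (hq : IsSpanIso H H' u u' T q) (hTS : T ⊆ S)
    (hS : S.Countable) (hu : IsIndepOn H.cl u S) (hu' : IsIndepOn H'.cl u' S) :
    ∃ r, q ⊆ r ∧ IsSpanIso H H' u u' S r := by
  obtain ⟨⟨X, r⟩, ⟨-, hqr⟩, hmax⟩ := zorn_le_nonempty₀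
    {x : Set I × Set (H.carrier × H'.carrier) | x.1 ⊆ S ∧ IsSpanIso H H' u u' x.1 x.2}
    (fun c hc hchain y hy => by
      have : Nonempty c := ⟨⟨y, hy⟩⟩
      have : IsDirectedOrder c := directedOn_iff_isDirectedOrder.1 hchain.directedOn
      exact ⟨(⋃ x : c, x.1.1, ⋃ x : c, x.1.2), ⟨iUnion_subset fun x => (hc x.2).1,
        iUnion h (monotone_fst.comp (Subtype.mono_coe c))
          (monotone_snd.comp (Subtype.mono_coe c)) fun x => (hc x.2).2⟩,
        fun x hx => ⟨subset_iUnion_of_subset ⟨x, hx⟩ subset_rfl,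
          subset_iUnion_of_subset ⟨x, hx⟩ subset_rfl⟩⟩) (T, q) ⟨hTS, hq⟩
  obtain ⟨hXS, hr⟩ := hmax.prop
  suffices hSX : S ⊆ X from ⟨r, hqr, hXS.antisymm hSX ▸ hr⟩
  intro i hi
  by_contra hiX
  obtain ⟨r', hrr', hr'⟩ := hr.exists_insert h (hS.mono hXS)
    (hu.notMem_cl h.pregeom hXS hi hiX) (hu'.notMem_cl h.symm.pregeom hXS hi hiX)
  exact hiX ((hmax.2 (y := (insert i X, r')) ⟨insert_subset hi hXS, hr'⟩
    ⟨subset_insert i X, hrr'⟩).1 (mem_insert i X))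

end IsSpanIso

theorem InCommonClass.exists_isSpanIso_of_finite (h : InCommonClass H H')
    (hp : IsPartialEmbedding (L := L) p) (hfin : p.Finite) (hpS : pdom p ⊆ H.cl (u '' S))
    (hbase : ∀ i ∈ S, (u i, u' i) ∈ p) : ∃ q, p ⊆ q ∧ IsSpanIso H H' u u' S q := by
  obtain ⟨q, hpq, hq, hqdom, hqimg⟩ := h.exists_extension_cl (g := ∅) (f := p)
    (Or.inr (image_empty _)) (Or.inr (image_empty _)) hfin (by rwa [empty_union])
  rw [empty_union] at hpq hqdom hqimg
  have hpS' : pimg p ⊆ H'.cl (u' '' S) := fun b hb =>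
    let ⟨a, hab⟩ := mem_pimg.1 hb
    h.mem_cl_image hp hab hbase (hpS (mem_pdom.2 ⟨b, hab⟩))
  refine ⟨q, hpq, hq, hqdom.trans ?_, hqimg.trans ?_, fun i hi => hpq (hbase i hi)⟩
  · exact (h.pregeom.cl_subset_cl hpS).antisymm
      (h.pregeom.mono (image_subset_iff.2 fun i hi => mem_pdom.2 ⟨_, hbase i hi⟩))
  · exact (h.symm.pregeom.cl_subset_cl hpS').antisymm
      (h.symm.pregeom.mono (image_subset_iff.2 fun i hi => mem_pimg.2 ⟨_, hbase i hi⟩))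

theorem InCommonClass.exists_isSpanIso (h : InCommonClass H H') (hS : S.Countable)
    (hu : IsIndepOn H.cl u S) (hu' : IsIndepOn H'.cl u' S) : ∃ q, IsSpanIso H H' u u' S q := by
  obtain ⟨q, -, hq⟩ := h.exists_isSpanIso_of_finite (u := u) (u' := u') (S := ∅)
    h.isPartialEmbedding_empty finite_empty (by simp [pdom]) (by simp)
  obtain ⟨r, -, hr⟩ := hq.exists_extension h (empty_subset S) hS hu hu'
  exact ⟨r, hr⟩

end SpanIso

/-- The crown of the closure of `u '' S` over `Z`: the points `u i` for `i ∈ S` together with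
the faces obtained by omitting one generator `u z` with `z ∈ Z`. The points are included so that
maps between crowns match the generators even when `Z` is empty. -/
def crown {I : Type*} (H : QMObj.{u} L) (u : I → H.carrier) (S Z : Set I) : Set H.carrier :=
  u '' S ∪ ⋃ z ∈ Z, H.cl (u '' (S \ {z}))

/-- `φ` is an isomorphism between the faces of the closure of `u '' S` omitting `u w` and `u z`,
exchanging the generators `u z` and `u w` and fixing the common face pointwise. -/
structure IsSwap {I : Type*} [DecidableEq I] (H : QMObj.{u} L) (u : I → H.carrier) (S : Set I)
    (z w : I) (φ : Set (H.carrier × H.carrier)) : Prop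
    extends IsSpanIso H H u (u ∘ Equiv.swap z w) (S \ {w}) φ where
  fix : idOn (H.cl (u '' (S \ {z, w}))) ⊆ φ

section Crown

variable {I : Type*} {H H' : QMObj.{u} L} {u : I → H.carrier} {u' : I → H'.carrier}
  {S T Y Z : Set I}

theorem base_mem_crown {i : I} (hi : i ∈ S) : u i ∈ crown H u S Z :=
  Or.inl (mem_image_of_mem u hi)

theorem face_subset_crown {z : I} (hz : z ∈ Z) : H.cl (u '' (S \ {z})) ⊆ crown H u S Z :=
  (subset_biUnion_of_mem (u := fun z => H.cl (u '' (S \ {z}))) hz).trans subset_union_right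

theorem crown_mono_right (hYZ : Y ⊆ Z) : crown H u S Y ⊆ crown H u S Z :=
  union_subset_union_right _ (biUnion_subset_biUnion_left hYZ)

theorem crown_insert (z : I) :
    crown H u S (insert z Y) = H.cl (u '' (S \ {z})) ∪ crown H u S Y := by
  rw [crown, biUnion_insert, union_left_comm, crown]

theorem monotone_crown (h : IsPregeometry H.cl) : Monotone fun S => crown H u S Z :=
  fun _ _ hST => union_subset_union (image_mono hST) (iUnion₂_mono fun _ _ =>
    h.monotone_cl_image u (sdiff_subset_sdiff_left hST))

theorem crown_subset_cl (h : IsPregeometry H.cl) : crown H u S Z ⊆ H.cl (u '' S) :=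
  union_subset (h.subset_cl _)
    (iUnion₂_subset fun _ _ => h.monotone_cl_image u sdiff_subset)

theorem exists_finite_support_crown (h : IsPregeometry H.cl) {a : H.carrier}
    (ha : a ∈ crown H u S Z) : ∃ F ⊆ S, F.Finite ∧ a ∈ crown H u F Z := by
  rcases ha with ⟨i, hi, rfl⟩ | ha
  · exact ⟨{i}, singleton_subset_iff.2 hi, finite_singleton i, base_mem_crown rfl⟩
  · obtain ⟨z, hz, ha⟩ := mem_iUnion₂.1 ha
    obtain ⟨F, hFS, hF, haF⟩ := h.exists_finite_support ha
    refine ⟨F, hFS.trans sdiff_subset, hF, face_subset_crown hz ?_⟩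
    rwa [sdiff_singleton_eq_self fun hzF => (hFS hzF).2 rfl]

theorem crown_comp (e : Equiv.Perm I) (he : ∀ z ∈ Z, e z = z) :
    crown H (u ∘ e) S Z = crown H u (e '' S) Z := by
  simp only [crown, image_comp, image_sdiff e.injective, image_singleton]
  exact congrArg _ (iUnion₂_congr fun z hz => by rw [he z hz])

theorem InCommonClass.mem_crown (h : InCommonClass H H') {p : Set (H.carrier × H'.carrier)}
    (hp : IsPartialEmbedding (L := L) p) (hbase : ∀ i ∈ S, (u i, u' i) ∈ p) {a : H.carrier}
    {b : H'.carrier} (hab : (a, b) ∈ p) (ha : a ∈ crown H u S Z) : b ∈ crown H' u' S Z := by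
  rcases ha with ⟨i, hi, rfl⟩ | ha
  · exact hp.right_unique (hbase i hi) hab ▸ base_mem_crown hi
  · obtain ⟨z, hz, ha⟩ := mem_iUnion₂.1 ha
    exact face_subset_crown hz (h.mem_cl_image hp hab (fun i hi => hbase i hi.1) ha)

theorem swap_image_sdiff_singleton [DecidableEq I] {z w : I} (hz : z ∈ S) (hw : w ∈ S) :
    Equiv.swap z w '' (S \ {w}) = S \ {z} := by
  rw [image_sdiff (Equiv.injective _), image_singleton, Equiv.swap_apply_right]
  congr 1
  refine (Equiv.image_eq_preimage_symm _ _).trans (ext fun i => ?_)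
  rw [mem_preimage, Equiv.symm_swap]
  by_cases hiz : i = z
  · simp [hiz, hz, hw]
  by_cases hiw : i = w
  · simp [hiw, hz, hw]
  · rw [Equiv.swap_apply_of_ne_of_ne hiz hiw]

theorem exists_isSwap [DecidableEq I] (h : InCommonClass H H) (hS : S.Countable)
    (hu : IsIndepOn H.cl u S) {z w : I} (hz : z ∈ S) (hw : w ∈ S) (hzw : z ≠ w) :
    ∃ φ, IsSwap H u S z w φ := by
  have hfix : ∀ i ∈ S \ {z, w}, (u ∘ Equiv.swap z w) i = u i := fun i hi => by
    rw [Function.comp_apply, Equiv.swap_apply_of_ne_of_ne (fun hiz => hi.2 (Or.inl hiz))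
      fun hiw => hi.2 (Or.inr hiw)]
  have himg : (u ∘ Equiv.swap z w) '' (S \ {z, w}) = u '' (S \ {z, w}) := image_congr hfix
  have hid : IsSpanIso H H u (u ∘ Equiv.swap z w) (S \ {z, w})
      (idOn (H.cl (u '' (S \ {z, w})))) :=
    ⟨.idOn _, pdom_idOn _, (pimg_idOn _).trans (congrArg H.cl himg.symm),
      fun i hi => ⟨(hfix i hi).symm, h.pregeom.mem_cl_image u hi⟩⟩
  obtain ⟨φ, hφ, hiso⟩ := hid.exists_insert h (hS.mono sdiff_subset) (i := z)
    (hu.notMem_cl h.pregeom sdiff_subset hz (by simp)) (by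
      rw [himg, Function.comp_apply, Equiv.swap_apply_left]
      exact hu.notMem_cl h.pregeom sdiff_subset hw (by simp))
  have hins : insert z (S \ {z, w}) = S \ {w} := by
    rw [insert_sdiff_insert]
    exact insert_eq_of_mem ⟨hz, hzw⟩
  exact ⟨φ, hins ▸ hiso, hφ⟩

namespace IsSwap

variable [DecidableEq I] {z w : I} {φ σ : Set (H.carrier × H.carrier)}

theorem pimg_eq_face (hφ : IsSwap H u S z w φ) (hz : z ∈ S) (hw : w ∈ S) :
    pimg φ = H.cl (u '' (S \ {z})) := by
  rw [hφ.pimg_eq, image_comp, swap_image_sdiff_singleton hz hw]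

theorem idOn_crown_subset_conj (hφ : IsSwap H u S z w φ) (h : InCommonClass H H) (hz : z ∈ S)
    (hw : w ∈ S) (hzY : z ∉ Y) (hwY : w ∉ Y) (hσ : idOn (crown H u (S \ {z}) Y) ⊆ σ) :
    idOn (crown H u (S \ {w}) Y) ⊆ φ ○ (σ ○ SetRel.inv φ) := by
  rintro ⟨a, b⟩ ⟨hab, ha⟩
  obtain rfl : a = b := hab
  obtain ⟨c, hac⟩ := mem_pdom.1 (hφ.pdom_eq ▸ crown_subset_cl h.pregeom ha)
  have hc : c ∈ crown H u (S \ {z}) Y := by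
    have := h.mem_crown hφ.isPartialEmbedding hφ.base_mem hac ha
    rwa [crown_comp _ fun y hy => Equiv.swap_apply_of_ne_of_ne (ne_of_mem_of_not_mem hy hzY)
      (ne_of_mem_of_not_mem hy hwY), swap_image_sdiff_singleton hz hw] at this
  exact ⟨c, hac, c, hσ ⟨rfl, hc⟩, hac⟩

theorem restr_subset_conj (hφ : IsSwap H u S z w φ) (h : InCommonClass H H)
    (hσ : IsPartialEmbedding (L := L) σ) (hT : T ⊆ S \ {z, w}) (hbase : ∀ i ∈ T, (u i, u i) ∈ σ) :
    restr σ (H.cl (u '' T)) ⊆ φ ○ (σ ○ SetRel.inv φ) := by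
  rintro ⟨a, b⟩ ⟨hab, ha⟩
  have hTS := h.pregeom.monotone_cl_image u hT
  have hb : b ∈ H.cl (u '' T) := h.mem_cl_image hσ hab hbase ha
  exact ⟨a, hφ.fix ⟨rfl, hTS ha⟩, b, hab, hφ.fix ⟨rfl, hTS hb⟩⟩

theorem idOn_crown_insert_subset (hφ : IsSwap H u S z w φ) (h : InCommonClass H H) (hz : z ∈ S)
    (hw : w ∈ S) (hzY : z ∉ Y) (hwY : w ∉ Y) (hσ : IsPartialEmbedding (L := L) σ)
    (hσimg : pimg σ = H.cl (u '' S)) (hσY : idOn (crown H u S Y) ⊆ σ) :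
    idOn (crown H u (S \ {w}) (insert z Y)) ⊆ SetRel.inv (φ ○ (σ ○ SetRel.inv φ)) ○ σ := by
  have hcrown (T : Set I) : crown H u (S \ T) Y ⊆ crown H u S Y :=
    monotone_crown h.pregeom sdiff_subset
  rintro ⟨c, d⟩ ⟨hcd, hc⟩
  obtain rfl : c = d := hcd
  rw [crown_insert, sdiff_sdiff_comm, sdiff_sdiff, singleton_union] at hc
  rcases hc with hc | hc
  · obtain ⟨x, hxc⟩ := mem_pimg.1
      (hσimg ▸ h.pregeom.monotone_cl_image u sdiff_subset hc : c ∈ pimg σ)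
    have hx : x ∈ H.cl (u '' (S \ {z, w})) := h.mem_cl_image hσ.inv hxc
      (fun i hi => hσY ⟨rfl, base_mem_crown hi.1⟩) hc
    exact ⟨x, ⟨x, hφ.fix ⟨rfl, hx⟩, c, hxc, hφ.fix ⟨rfl, hc⟩⟩, hxc⟩
  · have hcc := hφ.idOn_crown_subset_conj h hz hw hzY hwY
      (fun x hx => hσY ⟨hx.1, hcrown _ hx.2⟩) (show (c, c) ∈ idOn _ from ⟨rfl, hc⟩)
    exact ⟨c, hcc, hσY ⟨rfl, hcrown _ hc⟩⟩

end IsSwap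

theorem isPartialEmbedding_restr_union_idOn_crown (h : InCommonClass H H) (hS : S.Countable)
    (hu : IsIndepOn H.cl u S) {z : I} (hz : z ∈ S) (hzY : z ∉ Y) (hSY : (S \ Y).Infinite)
    {σ : Set (H.carrier × H.carrier)} (hσ : IsPartialEmbedding (L := L) σ)
    (hfix : idOn (crown H u (S \ {z}) Y) ⊆ σ) :
    IsPartialEmbedding (L := L)
      (restr σ (H.cl (u '' (S \ {z}))) ∪ idOn (crown H u S Y)) := by
  classical
  refine .of_finite fun t ht hfin => ?_
  obtain ⟨F, hFS, hF, htF⟩ := exists_finite_support_of_finite (S := S)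
    (K := fun F => restr σ (H.cl (u '' (F \ {z}))) ∪ idOn (crown H u F Y))
    (fun F F' hFF' => union_subset_union
      (fun x hx => ⟨hx.1, h.pregeom.monotone_cl_image u (sdiff_subset_sdiff_left hFF') hx.2⟩)
      fun x hx => ⟨hx.1, monotone_crown h.pregeom hFF' hx.2⟩)
    (by
      rintro x (⟨hxσ, hx⟩ | ⟨hxx, hx⟩)
      · obtain ⟨F, hFS, hF, hxF⟩ := h.pregeom.exists_finite_support hx
        refine ⟨F, hFS.trans sdiff_subset, hF, Or.inl ⟨hxσ, ?_⟩⟩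
        rwa [sdiff_singleton_eq_self fun hzF => (hFS hzF).2 rfl]
      · obtain ⟨F, hFS, hF, hxF⟩ := exists_finite_support_crown h.pregeom hx
        exact ⟨F, hFS, hF, Or.inr ⟨hxx, hxF⟩⟩) hfin ht
  obtain ⟨w, ⟨hwS, hwY⟩, hwF⟩ := (hSY.sdiff (hF.insert z)).nonempty
  rw [mem_insert_iff, not_or] at hwF
  obtain ⟨φ, hφ⟩ := exists_isSwap h hS hu hz hwS (Ne.symm hwF.1)
  have hφpe := hφ.isPartialEmbedding
  refine (hφpe.comp (hσ.comp hφpe.inv)).mono (htF.trans (union_subset ?_ ?_))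
  · exact hφ.restr_subset_conj h hσ
      (fun i hi => ⟨hFS hi.1, not_or.2 ⟨hi.2, ne_of_mem_of_not_mem hi.1 hwF.2⟩⟩)
      fun i hi => hfix ⟨rfl, base_mem_crown ⟨hFS hi.1, hi.2⟩⟩
  · have hFw : F ⊆ S \ {w} := subset_sdiff_singleton hFS hwF.2
    exact fun x hx => hφ.idOn_crown_subset_conj h hz hwS hzY hwY hfix
      ⟨hx.1, monotone_crown h.pregeom hFw hx.2⟩

theorem exists_finite_isolating_endo
    (h : InCommonClass H H) (hS : S.Countable) (hu : IsIndepOn H.cl u S) {z : I} (hz : z ∈ S)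
    (hzY : z ∉ Y) (hSY : (S \ insert z Y).Infinite) {v : Set H.carrier} (hv : v.Finite)
    (hvS : v ⊆ H.cl (u '' S)) :
    ∃ e ⊆ H.cl (u '' (S \ {z})), e.Finite ∧ ∀ σ : Set (H.carrier × H.carrier),
      IsPartialEmbedding (L := L) σ → pimg σ = H.cl (u '' S) → idOn (crown H u S Y) ⊆ σ →
      idOn e ⊆ σ →
        IsPartialEmbedding (L := L) (restr σ v ∪ idOn (crown H u S (insert z Y))) := by
  classical
  obtain ⟨F, hFS, hF, hvF⟩ := exists_finite_support_of_finite (h.pregeom.monotone_cl_image u)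
    (fun _ => h.pregeom.exists_finite_support) hv hvS
  obtain ⟨w, ⟨hwS, hwY⟩, hwF⟩ := (hSY.sdiff hF).nonempty
  obtain ⟨hwz, hwY'⟩ := not_or.1 hwY
  obtain ⟨φ, hφ⟩ := exists_isSwap h hS hu hz hwS (Ne.symm hwz)
  have hvφ : v ⊆ H.cl (u '' (S \ {w})) :=
    hvF.trans (h.pregeom.monotone_cl_image u (subset_sdiff_singleton hFS hwF))
  refine ⟨pimg (restr φ v), hφ.pimg_eq_face hz hwS ▸ image_mono (restr_subset φ v),
    (hφ.isPartialEmbedding.finite_restr hv).image _, fun σ hσ hσimg hσY hσe => ?_⟩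
  let σ' := φ ○ (σ ○ SetRel.inv φ)
  have hσ' : IsPartialEmbedding (L := L) σ' :=
    hφ.isPartialEmbedding.comp (hσ.comp hφ.isPartialEmbedding.inv)
  have fix_v : idOn v ⊆ σ' := by
    rintro ⟨a, b⟩ ⟨hab, ha⟩
    obtain rfl : a = b := hab
    obtain ⟨c, hac⟩ := mem_pdom.1 (hφ.pdom_eq ▸ hvφ ha)
    exact ⟨c, hac, c, hσe ⟨rfl, mem_pimg.2 ⟨a, hac, ha⟩⟩, hac⟩
  refine (isPartialEmbedding_restr_union_idOn_crown h hS hu hwS hwY hSY (hσ'.inv.comp hσ)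
    (hφ.idOn_crown_insert_subset h hz hwS hzY hwY' hσ hσimg hσY)).mono
    (union_subset_union_left _ ?_)
  rintro ⟨a, b⟩ ⟨hab, ha⟩
  have haa : (a, a) ∈ σ' := fix_v ⟨rfl, ha⟩
  exact ⟨⟨a, haa, hab⟩, hvφ ha⟩

end Crown

/-- `f` is an isomorphism between the crowns of the closures of `u '' S` and `u' '' S` over `Z`
that sends `u i` to `u' i` for `i ∈ S`. -/
structure IsCrownMap {I : Type*} (H H' : QMObj.{u} L) (u : I → H.carrier) (u' : I → H'.carrier)
    (S Z : Set I) (f : Set (H.carrier × H'.carrier)) : Prop where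
  isPartialEmbedding : IsPartialEmbedding (L := L) f
  pdom_eq : pdom f = crown H u S Z
  pimg_eq : pimg f = crown H' u' S Z
  base_mem : ∀ i ∈ S, (u i, u' i) ∈ f

/-- Every isomorphism between the crowns over `Z`, even when prolonged by finitely many pairs,
extends to an isomorphism between the closures of `u '' S` and `u' '' S`. -/
def CrownExtension {I : Type*} (H H' : QMObj.{u} L) (u : I → H.carrier) (u' : I → H'.carrier)
    (S Z : Set I) : Prop :=
  ∀ f s : Set (H.carrier × H'.carrier), IsCrownMap H H' u u' S Z f → s.Finite →
    pdom s ⊆ H.cl (u '' S) → IsPartialEmbedding (L := L) (f ∪ s) →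
      ∃ q, f ∪ s ⊆ q ∧ IsSpanIso H H' u u' S q

section CrownExtension

variable {I : Type*} {H H' : QMObj.{u} L} {u : I → H.carrier} {u' : I → H'.carrier}
  {S Y Z : Set I} {f : Set (H.carrier × H'.carrier)}

theorem IsCrownMap.inv (hf : IsCrownMap H H' u u' S Z f) :
    IsCrownMap H' H u' u S Z (SetRel.inv f) :=
  ⟨hf.isPartialEmbedding.inv, (pdom_inv f).trans hf.pimg_eq, (pimg_inv f).trans hf.pdom_eq,
    hf.base_mem⟩

theorem InCommonClass.isCrownMap_restr (h : InCommonClass H H')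
    {p : Set (H.carrier × H'.carrier)} (hp : IsPartialEmbedding (L := L) p)
    (hbase : ∀ i ∈ S, (u i, u' i) ∈ p) (hdom : crown H u S Z ⊆ pdom p)
    (himg : crown H' u' S Z ⊆ pimg p) : IsCrownMap H H' u u' S Z (restr p (crown H u S Z)) where
  isPartialEmbedding := hp.mono (restr_subset _ _)
  pdom_eq := pdom_restr hdom
  pimg_eq := by
    refine (image_subset_iff.2 fun x hx => ?_).antisymm fun b hb => ?_
    · exact h.mem_crown hp hbase hx.1 hx.2
    · obtain ⟨a, hab⟩ := mem_pimg.1 (himg hb)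
      exact mem_pimg.2 ⟨a, hab, h.symm.mem_crown hp.inv hbase hab hb⟩
  base_mem := fun i hi => ⟨hbase i hi, base_mem_crown hi⟩

theorem InCommonClass.crownExtension_empty (h : InCommonClass H H') (hS : S.Countable)
    (hu : IsIndepOn H.cl u S) (hu' : IsIndepOn H'.cl u' S) :
    CrownExtension H H' u u' S ∅ := by
  intro f s hf hs hsS hfs
  obtain ⟨F, hFS, hF, hsF⟩ := exists_finite_support_of_finite (h.pregeom.monotone_cl_image u)
    (fun _ => h.pregeom.exists_finite_support) (hs.image Prod.fst) hsS
  have hbase : (fun i => (u i, u' i)) '' F ⊆ f :=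
    image_subset_iff.2 fun i hi => hf.base_mem i (hFS hi)
  obtain ⟨q, hpq, hq⟩ := h.exists_isSpanIso_of_finite (u := u) (u' := u') (S := F)
    (hfs.mono (union_subset_union_left s hbase)) ((hF.image _).union hs)
    (by
      rw [pdom, image_union, image_image]
      exact union_subset (h.pregeom.subset_cl _) hsF)
    fun i hi => Or.inl (mem_image_of_mem _ hi)
  obtain ⟨r, hqr, hr⟩ := hq.exists_extension h hFS hS hu hu'
  refine ⟨r, union_subset ?_ ((subset_union_right.trans hpq).trans hqr), hr⟩
  rintro ⟨a, b⟩ hab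
  have ha : a ∈ crown H u S ∅ := hf.pdom_eq ▸ mem_pdom.2 ⟨b, hab⟩
  obtain ⟨i, hi, rfl⟩ : a ∈ u '' S := by simpa [crown] using ha
  exact hf.isPartialEmbedding.right_unique (hf.base_mem i hi) hab ▸ hr.base_mem i hi

theorem IsSpanIso.pimg_comp_inv {q r : Set (H.carrier × H'.carrier)}
    (hq : IsSpanIso H H' u u' S q) (hr : IsSpanIso H H' u u' S r) :
    pimg (q ○ SetRel.inv r) = H.cl (u '' S) := by
  refine hr.pdom_eq ▸ Subset.antisymm (fun b hb => ?_) fun b hb => ?_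
  · obtain ⟨a, c, -, hbc⟩ := mem_pimg.1 hb
    exact mem_pdom.2 ⟨c, hbc⟩
  · obtain ⟨c, hbc⟩ := mem_pdom.1 hb
    obtain ⟨a, hac⟩ := mem_pimg.1
      ((hq.pimg_eq.trans hr.pimg_eq.symm).ge (mem_pimg.2 ⟨b, hbc⟩) : c ∈ pimg q)
    exact mem_pimg.2 ⟨a, c, hac, hbc⟩

theorem InCommonClass.exists_finite_isolating (h : InCommonClass H H') (hS : S.Countable)
    (hu : IsIndepOn H.cl u S) {z : I} (hz : z ∈ S) (hzY : z ∉ Y)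
    (hSY : (S \ insert z Y).Infinite) {v : Set H.carrier} (hv : v.Finite)
    (hvS : v ⊆ H.cl (u '' S)) :
    ∃ e ⊆ H.cl (u '' (S \ {z})), e.Finite ∧ ∀ ψ χ : Set (H.carrier × H'.carrier),
      IsSpanIso H H' u u' S ψ → IsSpanIso H H' u u' S χ → restr χ (crown H u S Y ∪ e) ⊆ ψ →
        IsPartialEmbedding (L := L) (restr ψ v ∪ restr χ (crown H u S (insert z Y))) := by
  obtain ⟨e, heS, he, isolating⟩ :=
    exists_finite_isolating_endo h.left hS hu hz hzY hSY hv hvS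
  refine ⟨e, heS, he, fun ψ χ hψ hχ hχψ => ?_⟩
  have hYe : crown H u S Y ∪ e ⊆ pdom χ :=
    hχ.pdom_eq ▸ union_subset (crown_subset_cl h.pregeom)
      (heS.trans (h.pregeom.monotone_cl_image u sdiff_subset))
  have hfix : idOn (crown H u S Y ∪ e) ⊆ ψ ○ SetRel.inv χ := by
    rintro ⟨x, y⟩ ⟨hxy, hx⟩
    obtain rfl : x = y := hxy
    obtain ⟨x', hx'⟩ := mem_pdom.1 (hYe hx)
    exact ⟨x', hχψ ⟨hx', hx⟩, hx'⟩
  refine ((isolating _ (hψ.isPartialEmbedding.comp hχ.isPartialEmbedding.inv)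
    (hψ.pimg_comp_inv hχ) (fun x hx => hfix ⟨hx.1, Or.inl hx.2⟩)
    fun x hx => hfix ⟨hx.1, Or.inr hx.2⟩).comp hχ.isPartialEmbedding).mono ?_
  rintro ⟨x, y⟩ (⟨hxy, hx⟩ | ⟨hxy, hx⟩)
  · obtain ⟨x', hx'⟩ := mem_pimg.1 ((hψ.pimg_eq.trans hχ.pimg_eq.symm).le (mem_pimg.2 ⟨x, hxy⟩))
    exact ⟨x', Or.inl ⟨⟨y, hxy, hx'⟩, hx⟩, hx'⟩
  · exact ⟨x, Or.inr ⟨rfl, hx⟩, hxy⟩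

namespace CrownExtension

theorem exists_restr_subset (ih : CrownExtension H H' u u' S Y) (h : InCommonClass H H')
    (hf : IsCrownMap H H' u u' S Z f) (hYZ : Y ⊆ Z) {e : Set H.carrier} (he : e.Finite)
    (heS : e ⊆ H.cl (u '' S)) {s : Set (H.carrier × H'.carrier)} (hs : s.Finite)
    (hsS : pdom s ⊆ H.cl (u '' S)) (hfs : IsPartialEmbedding (L := L) (f ∪ s)) :
    ∃ ψ, restr f (crown H u S Y ∪ e) ⊆ ψ ∧ s ⊆ ψ ∧ IsSpanIso H H' u u' S ψ := by
  have hdom : pdom (restr f e ∪ s) ⊆ H.cl (u '' S) := by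
    rw [pdom, image_union]
    exact union_subset (image_subset_iff.2 fun x hx => heS hx.2) hsS
  have hfY := h.isCrownMap_restr hf.isPartialEmbedding hf.base_mem
    (hf.pdom_eq ▸ crown_mono_right hYZ) (hf.pimg_eq ▸ crown_mono_right hYZ)
  obtain ⟨ψ, hψ, hiso⟩ := ih _ _ hfY
    ((hf.isPartialEmbedding.finite_restr he).union hs) hdom
    (hfs.mono (union_subset ((restr_subset f _).trans subset_union_left)
      (union_subset_union_left s (restr_subset f e))))
  refine ⟨ψ, ?_, (subset_union_right.trans subset_union_right).trans hψ, hiso⟩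
  rintro x ⟨hx, hxY | hxe⟩
  exacts [hψ (Or.inl ⟨hx, hxY⟩), hψ (Or.inr (Or.inl ⟨hx, hxe⟩))]

theorem forth (ih : CrownExtension H H' u u' S Y) (h : InCommonClass H H') (hS : S.Countable)
    (hu : IsIndepOn H.cl u S) {z : I} (hz : z ∈ S) (hzY : z ∉ Y)
    (hSY : (S \ insert z Y).Infinite) (hf : IsCrownMap H H' u u' S (insert z Y) f) :
    Forth L f (H.cl (u '' S)) (H'.cl (u' '' S)) := by
  intro s hs hsK hfs a ha
  have hsS : pdom s ⊆ H.cl (u '' S) := image_subset_iff.2 fun x hx => (hsK hx).1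
  obtain ⟨e, heS, he, isolating⟩ := h.exists_finite_isolating (u' := u') hS hu hz hzY hSY
    ((hs.image Prod.fst).insert a) (insert_subset ha hsS)
  have hYe : crown H u S Y ∪ e ⊆ pdom f := hf.pdom_eq ▸
    union_subset (crown_mono_right (subset_insert z Y))
      (heS.trans (face_subset_crown (mem_insert z Y)))
  have heK := heS.trans (h.pregeom.monotone_cl_image u sdiff_subset)
  obtain ⟨ψ, hfψ, hsψ, hψ⟩ := ih.exists_restr_subset h hf (subset_insert z Y) he heK hs hsS hfs
  obtain ⟨a', haa'⟩ := mem_pdom.1 (hψ.pdom_eq ▸ ha)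
  refine ⟨a', hψ.pimg_eq ▸ mem_pimg.2 ⟨a, haa'⟩, .of_finite fun t ht hfin => ?_⟩
  have htf : t ∩ f ⊆ f := inter_subset_right
  obtain ⟨χ, hfχ, htχ, hχ⟩ := ih.exists_restr_subset h hf (subset_insert z Y) he heK
    (hfin.subset inter_subset_left)
    ((image_mono htf).trans (hf.pdom_eq.trans_subset (crown_subset_cl h.pregeom)))
    (by rw [union_eq_left.2 htf]; exact hf.isPartialEmbedding)
  have hχψ : restr χ (crown H u S Y ∪ e) ⊆ ψ := by
    rintro ⟨x, y⟩ ⟨hxy, hx⟩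
    obtain ⟨y', hxy'⟩ := mem_pdom.1 (hYe hx)
    rw [hχ.isPartialEmbedding.right_unique hxy (hfχ ⟨hxy', hx⟩)]
    exact hfψ ⟨hxy', hx⟩
  refine (isolating ψ χ hψ hχ hχψ).mono fun x hxt => ?_
  rcases ht hxt with (hxf | hxs) | hxa
  · exact Or.inr ⟨htχ ⟨hxt, hxf⟩, hf.pdom_eq ▸ mem_image_of_mem _ hxf⟩
  · exact Or.inl ⟨hsψ hxs, Or.inr (mem_image_of_mem _ hxs)⟩
  · rw [mem_singleton_iff.1 hxa]
    exact Or.inl ⟨haa', mem_insert a _⟩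

theorem insert (ih : CrownExtension H H' u u' S Y) (ih' : CrownExtension H' H u' u S Y)
    (h : InCommonClass H H') (hS : S.Countable) (hu : IsIndepOn H.cl u S)
    (hu' : IsIndepOn H'.cl u' S) {z : I} (hz : z ∈ S) (hzY : z ∉ Y)
    (hSY : (S \ insert z Y).Infinite) : CrownExtension H H' u u' S (insert z Y) := by
  intro f s hf hs hsS hfs
  have hdom : pdom (f ∪ s) ⊆ H.cl (u '' S) := by
    rw [pdom, image_union]
    exact union_subset (hf.pdom_eq.trans_subset (crown_subset_cl h.pregeom)) hsS
  have hfsK : f ∪ s ⊆ H.cl (u '' S) ×ˢ H'.cl (u' '' S) := fun x hx =>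
    have hx1 := hdom (mem_image_of_mem _ hx)
    ⟨hx1, h.mem_cl_image hfs hx (fun i hi => Or.inl (hf.base_mem i hi)) hx1⟩
  have hsK := subset_union_right.trans hfsK
  obtain ⟨q, hq, hqpe, hqdom, hqimg⟩ := exists_back_and_forth (h.countable_cl (hS.image u))
    (h.symm.countable_cl (hS.image u')) hfs hfsK
    ((ih.forth h hS hu hz hzY hSY hf).union hs hsK)
    ((ih'.forth h.symm hS hu' hz hzY hSY hf.inv).union (inv_finite hs) fun x hx => (hsK hx).symm)
  exact ⟨q, hq, hqpe, hqdom, hqimg, fun i hi => hq (Or.inl (hf.base_mem i hi))⟩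

end CrownExtension

theorem InCommonClass.crownExtension (h : InCommonClass H H') (hS : S.Countable)
    (hu : IsIndepOn H.cl u S) (hu' : IsIndepOn H'.cl u' S) (hZ : Z.Finite) (hZS : Z ⊆ S)
    (hSZ : (S \ Z).Infinite) : CrownExtension H H' u u' S Z := by
  induction Z, hZ using Set.Finite.induction_on generalizing H H' with
  | empty => exact h.crownExtension_empty hS hu hu'
  | @insert z Y hzY _ ih =>
    obtain ⟨hz, hYS⟩ := insert_subset_iff.1 hZS
    have hSY : (S \ Y).Infinite := hSZ.mono (sdiff_subset_sdiff_right (subset_insert z Y))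
    exact (ih h hu hu' hYS hSY).insert (ih h.symm hu' hu hYS hSY) h hS hu hu' hz hzY hSZ

end CrownExtension

section Amalgamation

variable {I : Type*} {H H' : QMObj.{u} L} {u : I → H.carrier} {u' : I → H'.carrier}
  {S Y Z : Set I}

theorem InCommonClass.isCrownMap_insert (h : InCommonClass H H') (hS : S.Countable)
    (hu : IsIndepOn H.cl u S) {z : I} (hz : z ∈ S) (hzY : z ∉ Y) (hSY : (S \ Y).Infinite)
    {g ψ : Set (H.carrier × H'.carrier)} (hg : IsSpanIso H H' u u' (S \ {z}) g)
    (hψ : IsSpanIso H H' u u' S ψ) (hgψ : restr g (crown H u (S \ {z}) Y) ⊆ ψ) :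
    IsCrownMap H H' u u' S (insert z Y) (g ∪ restr ψ (crown H u S Y)) := by
  have hcrown := h.isCrownMap_restr hψ.isPartialEmbedding hψ.base_mem
    ((crown_subset_cl h.pregeom).trans_eq hψ.pdom_eq.symm)
    ((crown_subset_cl h.symm.pregeom).trans_eq hψ.pimg_eq.symm) (Z := Y)
  have hfix : idOn (crown H u (S \ {z}) Y) ⊆ g ○ SetRel.inv ψ := by
    rintro ⟨x, y⟩ ⟨hxy, hx⟩
    obtain rfl : x = y := hxy
    obtain ⟨x', hx'⟩ := mem_pdom.1 (hg.pdom_eq ▸ crown_subset_cl h.pregeom hx)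
    exact ⟨x', hx', hgψ ⟨hx', hx⟩⟩
  refine ⟨((isPartialEmbedding_restr_union_idOn_crown h.left hS hu hz hzY hSY
    (hg.isPartialEmbedding.comp hψ.isPartialEmbedding.inv) hfix).comp
      hψ.isPartialEmbedding).mono ?_, ?_, ?_, fun i hi => Or.inr (hcrown.base_mem i hi)⟩
  · rintro ⟨x, y⟩ (hxy | ⟨hxy, hx⟩)
    · obtain ⟨x', hx'⟩ := mem_pimg.1 (hψ.pimg_eq ▸ h.symm.pregeom.monotone_cl_image u' sdiff_subset
        (hg.pimg_eq ▸ mem_pimg.2 ⟨x, hxy⟩) : y ∈ pimg ψ)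
      exact ⟨x', Or.inl ⟨⟨y, hxy, hx'⟩, hg.pdom_eq ▸ mem_pdom.2 ⟨y, hxy⟩⟩, hx'⟩
    · exact ⟨x, Or.inr ⟨rfl, hx⟩, hxy⟩
  · rw [pdom, image_union, crown_insert]
    exact congrArg₂ _ hg.pdom_eq hcrown.pdom_eq
  · rw [pimg, image_union, crown_insert]
    exact congrArg₂ _ hg.pimg_eq hcrown.pimg_eq

theorem InCommonClass.exists_isSpanIso_of_faces (h : InCommonClass H H') (hS : S.Countable)
    (hu : IsIndepOn H.cl u S) (hu' : IsIndepOn H'.cl u' S) (hZ : Z.Finite) (hZS : Z ⊆ S)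
    (hSZ : (S \ Z).Infinite) {g : I → Set (H.carrier × H'.carrier)}
    (hg : ∀ z ∈ Z, IsSpanIso H H' u u' (S \ {z}) (g z))
    (compat : ∀ z ∈ Z, ∀ y ∈ Z, restr (g z) (H.cl (u '' (S \ {y}))) ⊆ g y) :
    ∃ q, IsSpanIso H H' u u' S q ∧ ∀ z ∈ Z, g z ⊆ q := by
  induction Z, hZ using Set.Finite.induction_on with
  | empty => simpa using h.exists_isSpanIso hS hu hu'
  | @insert z Y hzY hY ih =>
    have hYZ := subset_insert z Y
    have hz := mem_insert z Y
    have hSY := hSZ.mono (sdiff_subset_sdiff_right hYZ)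
    obtain ⟨ψ, hψ, hgψ⟩ := ih (hYZ.trans hZS) hSY (fun y hy => hg y (hYZ hy))
      fun y hy y' hy' => compat y (hYZ hy) y' (hYZ hy')
    have hgzψ : restr (g z) (crown H u (S \ {z}) Y) ⊆ ψ := by
      rintro ⟨x, x'⟩ ⟨hx, ⟨i, hi, rfl⟩ | hxY⟩
      · rw [(hg z hz).isPartialEmbedding.right_unique hx ((hg z hz).base_mem i hi)]
        exact hψ.base_mem i hi.1
      · obtain ⟨y, hy, hxy⟩ := mem_iUnion₂.1 hxY
        exact hgψ y hy (compat z hz y (hYZ hy)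
          ⟨hx, h.pregeom.monotone_cl_image u (sdiff_subset_sdiff_left sdiff_subset) hxy⟩)
    have hcrown := h.isCrownMap_insert hS hu (hZS hz) hzY hSY (hg z hz) hψ hgzψ
    obtain ⟨q, hq, hiso⟩ := h.crownExtension hS hu hu' (hY.insert z) hZS hSZ _ ∅ hcrown finite_empty
      (by simp [pdom]) (by rw [union_empty]; exact hcrown.isPartialEmbedding)
    rw [union_empty] at hq
    refine ⟨q, hiso, forall_mem_insert.2 ⟨subset_union_left.trans hq, fun y hy x hx => hq ?_⟩⟩
    exact Or.inr ⟨hgψ y hy hx,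
      face_subset_crown hy ((hg y (hYZ hy)).pdom_eq ▸ mem_image_of_mem _ hx)⟩

end Amalgamation

/-- The index set obtained from `B₀` by adding a finite set of indices outside `B₀`. -/
def adjoinFinset {I : Type*} (B₀ : Set I) (Z : Finset ↥B₀ᶜ) : Set I :=
  B₀ ∪ Subtype.val '' (Z : Set ↥B₀ᶜ)

section CoherentSystem

variable {I : Type*} {H H' : QMObj.{u} L} {u : I → H.carrier} {u' : I → H'.carrier} {B₀ : Set I}

theorem monotone_adjoinFinset (B₀ : Set I) : Monotone (adjoinFinset B₀) :=
  fun _ _ hYZ => union_subset_union_right _ (image_mono (Finset.coe_subset.2 hYZ))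

theorem adjoinFinset_erase [DecidableEq ↥B₀ᶜ] (Z : Finset ↥B₀ᶜ) (z : ↥B₀ᶜ) :
    adjoinFinset B₀ (Z.erase z) = adjoinFinset B₀ Z \ {↑z} := by
  rw [adjoinFinset, adjoinFinset, union_sdiff_distrib, sdiff_singleton_eq_self z.2,
    Finset.coe_erase, image_sdiff Subtype.val_injective, image_singleton]

theorem iUnion_adjoinFinset (B₀ : Set I) : ⋃ Z, adjoinFinset B₀ Z = Set.univ := by
  refine eq_univ_of_forall fun i => mem_iUnion.2 ?_
  by_cases hi : i ∈ B₀
  exacts [⟨∅, Or.inl hi⟩, ⟨{⟨i, hi⟩}, Or.inr (by simp)⟩]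

theorem InCommonClass.restr_face_subset (h : InCommonClass H H') {S : Set I}
    (hu : IsIndepOn H.cl u S) {y z : I} (hy : y ∈ S) {g g' r : Set (H.carrier × H'.carrier)}
    (hg : IsSpanIso H H' u u' (S \ {z}) g) (hr : IsSpanIso H H' u u' ((S \ {z}) \ {y}) r)
    (hrg : r ⊆ g) (hrg' : r ⊆ g') : restr g (H.cl (u '' (S \ {y}))) ⊆ g' := by
  rintro ⟨a, b⟩ ⟨hab, ha⟩
  have haz : a ∈ H.cl (u '' (S \ {z})) := hg.pdom_eq ▸ mem_pdom.2 ⟨b, hab⟩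
  obtain ⟨b', hab'⟩ := mem_pdom.1
    (hr.pdom_eq ▸ h.pregeom.cl_inter_cl_subset hu sdiff_subset hy ⟨haz, ha⟩)
  rw [hg.isPartialEmbedding.right_unique hab (hrg hab')]
  exact hrg' hab'

theorem InCommonClass.exists_monotone_isSpanIso (h : InCommonClass H H')
    (hu : IsIndepOn H.cl u Set.univ) (hu' : IsIndepOn H'.cl u' Set.univ) (hB₀ : B₀.Countable)
    (hB₀inf : B₀.Infinite) :
    ∃ q : Finset ↥B₀ᶜ → Set (H.carrier × H'.carrier), Monotone q ∧
      ∀ Z, IsSpanIso H H' u u' (adjoinFinset B₀ Z) (q Z) := by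
  classical
  refine exists_monotone_forall_of_exists_extension fun Z f hf hiso => ?_
  have hS : (adjoinFinset B₀ Z).Countable := hB₀.union (Z.finite_toSet.image _).countable
  have huS := hu.mono h.pregeom (subset_univ (adjoinFinset B₀ Z))
  have huS' := hu'.mono h.symm.pregeom (subset_univ (adjoinFinset B₀ Z))
  have erase_lt {z : ↥B₀ᶜ} (hz : z ∈ Z) : Z.erase z < Z := Finset.erase_ssubset hz
  have face (z : ↥B₀ᶜ) (hz : z ∈ Z) :
      IsSpanIso H H' u u' (adjoinFinset B₀ Z \ {↑z}) (f (Z.erase z)) :=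
    adjoinFinset_erase Z z ▸ hiso _ (erase_lt hz)
  let g : I → Set (H.carrier × H'.carrier) :=
    Function.extend Subtype.val (fun z : ↥B₀ᶜ => f (Z.erase z)) fun _ => ∅
  have g_eq (z : ↥B₀ᶜ) : g z = f (Z.erase z) := Subtype.val_injective.extend_apply _ _ z
  obtain ⟨q, hq, hgq⟩ := h.exists_isSpanIso_of_faces hS huS huS'
    (Z.finite_toSet.image Subtype.val) subset_union_right (g := g)
    (hB₀inf.mono fun i hi => ⟨Or.inl hi, fun ⟨z, _, hzi⟩ => z.2 (hzi ▸ hi)⟩)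
    (forall_mem_image.2 fun z hz => g_eq z ▸ face z hz)
    (forall_mem_image.2 fun z hz => forall_mem_image.2 fun y hy => by
      rw [g_eq, g_eq]
      have hzy : (Z.erase z).erase y < Z := (Finset.erase_subset _ _).trans_lt (erase_lt hz)
      refine h.restr_face_subset huS (Or.inr (mem_image_of_mem _ hy)) (face z hz) (r := f _)
        ?_ (hf hzy (erase_lt hz) (Finset.erase_subset _ _))
        (hf hzy (erase_lt hy) (Finset.erase_subset_erase y (Finset.erase_subset z Z)))
      rw [← adjoinFinset_erase, ← adjoinFinset_erase]
      exact hiso _ hzy)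
  refine ⟨q, hq, fun Y hY => ?_⟩
  obtain ⟨z, hz, hYz⟩ := Finset.exists_of_ssubset hY
  exact (hf hY (erase_lt hz) (Finset.subset_erase.2 ⟨hY.le, hYz⟩)).trans
    (g_eq z ▸ hgq z (mem_image_of_mem _ hz))

theorem InCommonClass.exists_isSpanIso_univ (h : InCommonClass H H')
    (hu : IsIndepOn H.cl u Set.univ) (hu' : IsIndepOn H'.cl u' Set.univ) :
    ∃ q, IsSpanIso H H' u u' Set.univ q := by
  cases finite_or_infinite I with
  | inl _ => exact h.exists_isSpanIso (to_countable _) hu hu'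
  | inr _ =>
    obtain ⟨q, hq, hiso⟩ := h.exists_monotone_isSpanIso hu hu'
      (countable_range (Infinite.natEmbedding I))
      (infinite_range_of_injective (Infinite.natEmbedding I).injective)
    have hunion := IsSpanIso.iUnion h (monotone_adjoinFinset _) hq hiso
    rw [iUnion_adjoinFinset] at hunion
    exact ⟨_, hunion⟩

end CoherentSystem

theorem statement_12_general {L : FirstOrder.Language.{v, w}} (C : Set (QMObj.{u} L))
    (hC : IsQMClass C) (H : QMObj.{u} L) (hH : H ∈ C) (H' : QMObj.{u} L) (hH' : H' ∈ C)
    (B : Set H.carrier) (B' : Set H'.carrier)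
    (hB : IsBasis H B) (hB' : IsBasis H' B') (e : ↥B ≃ ↥B') :
    ∃ ghat : H.carrier ≃[L] H'.carrier, ∀ b : ↥B, ghat ↑b = ↑(e b) := by
  have h : InCommonClass H H' := ⟨C, hC, hH, hH'⟩
  have hrange : range (Subtype.val ∘ e : B → H'.carrier) = B' := by
    rw [e.surjective.range_comp, Subtype.range_val]
  obtain ⟨q, hq⟩ := h.exists_isSpanIso_univ
    (hB.1.isIndepOn Subtype.val_injective Subtype.range_val)
    (hB'.1.isIndepOn (Subtype.val_injective.comp e.injective) hrange)
  obtain ⟨ghat, hghat⟩ := hq.isPartialEmbedding.exists_equiv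
    (by rw [hq.pdom_eq, image_univ, Subtype.range_val, hB.cl_eq_univ h.pregeom])
    (by rw [hq.pimg_eq, image_univ, hrange, hB'.cl_eq_univ h.symm.pregeom])
  exact ⟨ghat, fun b => hq.isPartialEmbedding.right_unique (hghat b) (hq.base_mem b (mem_univ b))⟩

/-- If `H, H' ∈ C` are uncountable, `B`, `B'` are bases of the
pregeometries `(H, cl_H)`, `(H', cl_{H'})` and `g : B → B'` is a bijection, then `g`
extends to an isomorphism `ĝ : H → H'` of `L`-structures. -/
theorem statement_12 {L : FirstOrder.Language.{v, w}} (C : Set (QMObj.{u} L))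
    (hC : IsQMClass C) (H : QMObj.{u} L) (hH : H ∈ C) (H' : QMObj.{u} L) (hH' : H' ∈ C)
    (huncH : Uncountable H.carrier) (huncH' : Uncountable H'.carrier)
    (B : Set H.carrier) (B' : Set H'.carrier)
    (hB : IsBasis H B) (hB' : IsBasis H' B') (e : ↥B ≃ ↥B') :
    ∃ ghat : H.carrier ≃[L] H'.carrier, ∀ b : ↥B, ghat ↑b = ↑(e b) := by
  exact statement_12_general C hC H hH H' hH' B B' hB hB' e

end QM
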